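/- The set of formulas of Form^Ag valid over the class of all (unirelational) jstit models for Ag is a proper subset of the set of formulas valid over the class of (unirelational) jstit models for Ag based on discrete time. In particular, for proof variables x, y, propositional variables p, q, and an agent j ∈ Ag, the formula A := K(¬Proven(x,p) ∨ Proven(y,q)) → (¬Prove(j,x,p) ∨ (y:q → (Proven(y,q) ∨ Prove(j,y,q)))) is valid over every jstit model based on discrete time but is falsified at some moment-history pair of some unirelational jstit model. -/

import Mathlib

open Classical

/-- Proof polynomials. -/
inductive Pol : Type
  | pvar : ℕ → Pol
  | pconst : ℕ → Pol
  | sum : Pol → Pol → Pol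
  | app : Pol → Pol → Pol
  | bang : Pol → Pol

/-- Formulas of explicit jstit logic over an agent community `Ag`. -/
inductive Form (Ag : Type) : Type
  | var : ℕ → Form Ag
  | and : Form Ag → Form Ag → Form Ag
  | neg : Form Ag → Form Ag
  | stit : Ag → Form Ag → Form Ag
  | box : Form Ag → Form Ag
  | pf : Pol → Form Ag → Form Ag
  | know : Form Ag → Form Ag
  | prove : Ag → Pol → Form Ag → Form Ag
  | proven : Pol → Form Ag → Form Ag

namespace Form

variable {Ag : Type}

def imp (A B : Form Ag) : Form Ag := Form.neg (Form.and A (Form.neg B))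

def or (A B : Form Ag) : Form Ag := Form.neg (Form.and (Form.neg A) (Form.neg B))

def falsum : Form Ag := Form.and (Form.var 0) (Form.neg (Form.var 0))

def dia (A : Form Ag) : Form Ag := Form.neg (Form.box (Form.neg A))

def diaStit (j : Ag) (A : Form Ag) : Form Ag := Form.neg (Form.stit j (Form.neg A))

def conjList : List (Form Ag) → Form Ag
  | [] => Form.neg falsum
  | [A] => A
  | A :: B :: rest => Form.and A (conjList (B :: rest))

def disjList : List (Form Ag) → Form Ag
  | [] => falsum
  | [A] => A
  | A :: B :: rest => Form.or A (disjList (B :: rest))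

end Form

/-- Conjunction of `F j` over all agents `j ∈ Ag`. -/
noncomputable def bigConjAg {Ag : Type} [Fintype Ag] (F : Ag → Form Ag) : Form Ag :=
  Form.conjList (((Finset.univ : Finset Ag).toList).map F)

/-- The axiom schemes (A0)-(A8), (B9)-(B13) of the system Π. -/
inductive Ax {Ag : Type} [Fintype Ag] : Form Ag → Prop
  | pl1 (A B : Form Ag) : Ax (A.imp (B.imp A))
  | pl2 (A B C : Form Ag) : Ax ((A.imp (B.imp C)).imp ((A.imp B).imp (A.imp C)))
  | pl3 (A B : Form Ag) : Ax (((A.neg).imp (B.neg)).imp (B.imp A))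
  | boxK (A B : Form Ag) : Ax ((Form.box (A.imp B)).imp ((Form.box A).imp (Form.box B)))
  | boxT (A : Form Ag) : Ax ((Form.box A).imp A)
  | box4 (A : Form Ag) : Ax ((Form.box A).imp (Form.box (Form.box A)))
  | box5 (A : Form Ag) : Ax ((Form.dia A).imp (Form.box (Form.dia A)))
  | stitK (j : Ag) (A B : Form Ag) :
      Ax ((Form.stit j (A.imp B)).imp ((Form.stit j A).imp (Form.stit j B)))
  | stitT (j : Ag) (A : Form Ag) : Ax ((Form.stit j A).imp A)
  | stit4 (j : Ag) (A : Form Ag) : Ax ((Form.stit j A).imp (Form.stit j (Form.stit j A)))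
  | stit5 (j : Ag) (A : Form Ag) : Ax ((Form.diaStit j A).imp (Form.stit j (Form.diaStit j A)))
  | a2 (j : Ag) (A : Form Ag) : Ax ((Form.box A).imp (Form.stit j A))
  | a3 (l : List (Ag × Form Ag)) (hne : l ≠ []) (hl : l.Pairwise (fun a b => a.1 ≠ b.1)) :
      Ax ((Form.conjList (l.map fun p => Form.dia (Form.stit p.1 p.2))).imp
          (Form.dia (Form.conjList (l.map fun p => Form.stit p.1 p.2))))
  | a4 (s t : Pol) (A B : Form Ag) :
      Ax ((Form.pf s (A.imp B)).imp ((Form.pf t A).imp (Form.pf (Pol.app s t) B)))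
  | a5 (t : Pol) (A : Form Ag) :
      Ax ((Form.pf t A).imp (Form.and (Form.pf (Pol.bang t) (Form.pf t A)) (Form.know A)))
  | a6 (s t : Pol) (A : Form Ag) :
      Ax (((Form.pf s A).or (Form.pf t A)).imp (Form.pf (Pol.sum s t) A))
  | kK (A B : Form Ag) : Ax ((Form.know (A.imp B)).imp ((Form.know A).imp (Form.know B)))
  | kT (A : Form Ag) : Ax ((Form.know A).imp A)
  | k4 (A : Form Ag) : Ax ((Form.know A).imp (Form.know (Form.know A)))
  | a8 (A : Form Ag) : Ax ((Form.know A).imp (Form.box (Form.know (Form.box A))))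
  | b9 (j : Ag) (t : Pol) (A : Form Ag) :
      Ax ((Form.prove j t A).imp
        (Form.and ((Form.proven t A).neg)
          (Form.and (Form.stit j (Form.prove j t A))
            (Form.and ((Form.box (Form.prove j t A)).neg) (Form.pf t A)))))
  | b10 (j : Ag) (t : Pol) (A B : Form Ag) :
      Ax ((Form.and (Form.prove j t A) (Form.pf t B)).imp (Form.prove j t B))
  | b11 (t : Pol) (A : Form Ag) :
      Ax ((Form.proven t A).imp (Form.and (Form.know (Form.proven t A)) (Form.pf t A)))
  | b12 (t : Pol) (A B : Form Ag) :
      Ax ((Form.and (Form.proven t A) (Form.pf t B)).imp (Form.proven t B))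
  | b13 (j : Ag) (t : Pol) (A : Form Ag) :
      Ax (((Form.prove j t A).neg).imp
        (Form.diaStit j (bigConjAg fun i => (Form.prove i t A).neg)))

/-- Provability in Π(CS): the axioms plus modus ponens, K-necessitation,
the rule (S4), and the rule inferring members of CS. -/
inductive Prov {Ag : Type} [Fintype Ag] (CS : Set (Form Ag)) : Form Ag → Prop
  | ax {A : Form Ag} : Ax A → Prov CS A
  | mp {A B : Form Ag} : Prov CS (A.imp B) → Prov CS A → Prov CS B
  | knec {A : Form Ag} : Prov CS A → Prov CS (Form.know A)
  | s4 {A : Form Ag} {l : List (Pol × Form Ag)} (hne : l ≠ []) :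
      Prov CS ((Form.know A).imp (Form.disjList (l.map fun p => (Form.proven p.1 p.2).neg))) →
      Prov CS ((Form.know A).imp
        (Form.disjList (l.map fun p => bigConjAg fun j => (Form.prove j p.1 p.2).neg)))
  | rcs {A : Form Ag} : A ∈ CS → Prov CS A

/-- Formulas of the form c_n : … : c_1 : A with A an axiom instance. -/
inductive CSForm {Ag : Type} [Fintype Ag] : Form Ag → Prop
  | base (c : ℕ) {A : Form Ag} : Ax A → CSForm (Form.pf (Pol.pconst c) A)
  | step (c : ℕ) {B : Form Ag} : CSForm B → CSForm (Form.pf (Pol.pconst c) B)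

/-- CS is a constant specification. -/
def IsConstSpec {Ag : Type} [Fintype Ag] (CS : Set (Form Ag)) : Prop :=
  (∀ A ∈ CS, CSForm A) ∧
  (∀ (c c' : ℕ) (B : Form Ag),
    Form.pf (Pol.pconst c) (Form.pf (Pol.pconst c') B) ∈ CS →
      Form.pf (Pol.pconst c') B ∈ CS)

/-- Γ is CS-consistent. -/
def ConsistentSet {Ag : Type} [Fintype Ag] (CS : Set (Form Ag)) (Γ : Set (Form Ag)) : Prop :=
  ¬ ∃ l : List (Form Ag), l ≠ [] ∧ (∀ A ∈ l, A ∈ Γ) ∧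
      Prov CS ((Form.conjList l).imp Form.falsum)

/-- Γ is CS-maxiconsistent. -/
def MaxiCons {Ag : Type} [Fintype Ag] (CS Γ : Set (Form Ag)) : Prop :=
  ConsistentSet CS Γ ∧ ∀ Δ, Γ ⊆ Δ → ConsistentSet CS Δ → Δ = Γ

/-- The raw ingredients of a jstit model (constraints imposed separately). -/
structure PreModel (Ag : Type) : Type 1 where
  W : Type
  le : W → W → Prop
  Choice : W → Ag → Set W → Set (Set W)
  Act : W → Set W → Set Pol
  R : W → W → Prop
  Re : W → W → Prop
  E : W → Pol → Set (Form Ag)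
  V : ℕ → W → Set W → Prop

namespace PreModel

variable {Ag : Type}

/-- h is a history (maximal chain) passing through m. -/
def HistAt (M : PreModel Ag) (m : M.W) (h : Set M.W) : Prop :=
  IsMaxChain M.le h ∧ m ∈ h

/-- The strict companion ⊲ of ⊴. -/
def lt (M : PreModel Ag) (m m' : M.W) : Prop := M.le m m' ∧ m ≠ m'

/-- h and g are undivided at m. -/
def Undiv (M : PreModel Ag) (m : M.W) (h g : Set M.W) : Prop :=
  ∃ m', M.lt m m' ∧ m' ∈ h ∧ m' ∈ g

/-- Act_m = ⋂_{h ∈ H_m} Act(m,h). -/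
def ActM (M : PreModel Ag) (m : M.W) : Set Pol :=
  {t | ∀ h, M.HistAt m h → t ∈ M.Act m h}

/-- Act_{(m,h,j)} = ⋂_{g ∈ Choice^m_j(h)} Act(m,g). -/
def ActC (M : PreModel Ag) (m : M.W) (h : Set M.W) (j : Ag) : Set Pol :=
  {t | ∀ g ∈ M.Choice m j h, t ∈ M.Act m g}

/-- The satisfaction relation M, m, h ⊨ A. -/
def Sat (M : PreModel Ag) : Form Ag → M.W → Set M.W → Prop
  | Form.var p, m, h => M.V p m h
  | Form.and A B, m, h => M.Sat A m h ∧ M.Sat B m h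
  | Form.neg A, m, h => ¬ M.Sat A m h
  | Form.stit j A, m, h => ∀ h' ∈ M.Choice m j h, M.Sat A m h'
  | Form.box A, m, _h => ∀ h', M.HistAt m h' → M.Sat A m h'
  | Form.know A, m, _h => ∀ m' h', M.R m m' → M.HistAt m' h' → M.Sat A m' h'
  | Form.pf t A, m, _h =>
      A ∈ M.E m t ∧ ∀ m' h', M.Re m m' → M.HistAt m' h' → M.Sat A m' h'
  | Form.prove j t A, m, h =>
      t ∈ M.ActC m h j ∧
      (A ∈ M.E m t ∧ ∀ m' h', M.Re m m' → M.HistAt m' h' → M.Sat A m' h') ∧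
      t ∉ M.ActM m
  | Form.proven t A, m, _h =>
      t ∈ M.ActM m ∧
      (A ∈ M.E m t ∧ ∀ m' h', M.Re m m' → M.HistAt m' h' → M.Sat A m' h')

/-- The eleven (plus basic order/partition) constraints making a `PreModel` a jstit model. -/
structure IsJStit (M : PreModel Ag) : Prop where
  nonempty : Nonempty M.W
  le_refl : ∀ m, M.le m m
  le_trans : ∀ m1 m2 m3, M.le m1 m2 → M.le m2 m3 → M.le m1 m3
  le_antisymm : ∀ m1 m2, M.le m1 m2 → M.le m2 m1 → m1 = m2
  histConn : ∀ m m1, ∃ m2, M.le m2 m ∧ M.le m2 m1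
  noBackBranch : ∀ m m1 m2, M.le m1 m → M.le m2 m → (M.le m1 m2 ∨ M.le m2 m1)
  choice_self : ∀ m j h, M.HistAt m h → h ∈ M.Choice m j h
  choice_hist : ∀ m j h, M.HistAt m h → ∀ g ∈ M.Choice m j h, M.HistAt m g
  choice_cells : ∀ m j h, M.HistAt m h → ∀ g ∈ M.Choice m j h, M.Choice m j g = M.Choice m j h
  noChoiceUndiv : ∀ m j h g, M.HistAt m h → M.HistAt m g → M.Undiv m h g →
      M.Choice m j h = M.Choice m j g
  indep : ∀ m (f : Ag → Set M.W), (∀ j, M.HistAt m (f j)) →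
      ∃ h, ∀ j, h ∈ M.Choice m j (f j)
  r_refl : ∀ m, M.R m m
  r_trans : ∀ m1 m2 m3, M.R m1 m2 → M.R m2 m3 → M.R m1 m3
  re_refl : ∀ m, M.Re m m
  re_trans : ∀ m1 m2 m3, M.Re m1 m2 → M.Re m2 m3 → M.Re m1 m3
  r_sub_re : ∀ m m', M.R m m' → M.Re m m'
  monoEv : ∀ (t : Pol) m m', M.Re m m' → M.E m t ⊆ M.E m' t
  evApp : ∀ m (s t : Pol) (A B : Form Ag),
      A.imp B ∈ M.E m s → A ∈ M.E m t → B ∈ M.E m (Pol.app s t)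
  evSum : ∀ m (s t : Pol), M.E m s ∪ M.E m t ⊆ M.E m (Pol.sum s t)
  evBang : ∀ m (t : Pol) (A : Form Ag), A ∈ M.E m t → Form.pf t A ∈ M.E m (Pol.bang t)
  expand : ∀ m' m h, M.lt m' m → M.HistAt m h → M.Act m' h ⊆ M.Act m h
  noNew : ∀ m t, t ∈ M.ActM m → ∃ m' h, M.lt m' m ∧ M.HistAt m h ∧ t ∈ M.Act m' h
  divide : ∀ m h g, M.HistAt m h → M.HistAt m g → M.Undiv m h g → M.Act m h = M.Act m g
  futureMatters : ∀ m m', M.le m m' → M.R m m'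
  transparency : ∀ m m', M.Re m m' → M.ActM m ⊆ M.ActM m'

/-- M is CS-normal. -/
def CSNormal [Fintype Ag] (M : PreModel Ag) (CS : Set (Form Ag)) : Prop :=
  ∀ (c : ℕ) (m : M.W) (A : Form Ag), Form.pf (Pol.pconst c) A ∈ CS → A ∈ M.E m (Pol.pconst c)

/-- M is unirelational: R_e ⊆ R (hence R_e = R). -/
def Unirelational (M : PreModel Ag) : Prop := ∀ m m', M.Re m m' → M.R m m'

/-- M is based on discrete time: every history is order-isomorphic to an
initial segment of ω. -/
def DiscreteTime (M : PreModel Ag) : Prop :=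
  ∀ h : Set M.W, IsMaxChain M.le h →
    ∃ f : M.W → ℕ,
      (∀ x ∈ h, ∀ y ∈ h, (M.le x y ↔ f x ≤ f y)) ∧
      (∀ x ∈ h, ∀ n : ℕ, n ≤ f x → ∃ y ∈ h, f y = n)

end PreModel

/-- The step relation between consecutive components of an element. -/
def ElemStep {Ag : Type} (Γ Δ : Set (Form Ag)) : Prop :=
  (∀ A : Form Ag, Form.know A ∈ Γ → Form.know A ∈ Δ) ∧
  (∀ (j : Ag) (t : Pol) (A : Form Ag), Form.prove j t A ∈ Γ → Form.proven t A ∈ Δ)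

/-- An element: a nonempty finite sequence of CS-maxiconsistent sets
satisfying the two transfer conditions. -/
def IsElement {Ag : Type} [Fintype Ag] (CS : Set (Form Ag)) (l : List (Set (Form Ag))) : Prop :=
  l ≠ [] ∧ (∀ Γ ∈ l, MaxiCons CS Γ) ∧ l.Chain' ElemStep

/-- end(ξ): the last component of an element. -/
def endSet {Ag : Type} (l : List (Set (Form Ag))) : Set (Form Ag) := l.getLastD ∅

/-- The relation ≡ between elements (of equal length). -/
def ElemEquiv {Ag : Type} (l₁ l₂ : List (Set (Form Ag))) : Prop :=
  l₁ ≠ [] ∧ l₂ ≠ [] ∧ l₁.dropLast = l₂.dropLast ∧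
  ∀ A : Form Ag, Form.box A ∈ endSet l₁ → A ∈ endSet l₂

/-- The ≡-equivalence class of an element ξ. -/
def eqcl {Ag : Type} [Fintype Ag] (CS : Set (Form Ag)) (ξ : List (Set (Form Ag))) :
    Set (List (Set (Form Ag))) :=
  {τ | IsElement CS τ ∧ ElemEquiv ξ τ}

/-- C is a ≡-equivalence class of elements. -/
def IsEqClass {Ag : Type} [Fintype Ag] (CS : Set (Form Ag))
    (C : Set (List (Set (Form Ag)))) : Prop :=
  ∃ ξ, IsElement CS ξ ∧ C = eqcl CS ξ

/-- The canonical Tree: † (= `none`) together with the standard moments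
([ξ]_≡, n) (= `some (⟨[ξ]_≡, _⟩, n)`). -/
abbrev CanW (Ag : Type) [Fintype Ag] (CS : Set (Form Ag)) : Type :=
  Option ({C : Set (List (Set (Form Ag))) // IsEqClass CS C} × ℕ)

/-- ξ is a proper initial segment of τ. -/
def ProperPrefix {α : Type} (ξ τ : List α) : Prop := ξ <+: τ ∧ ξ ≠ τ

/-- The canonical strict order ⊲. -/
def canLt {Ag : Type} [Fintype Ag] (CS : Set (Form Ag)) : CanW Ag CS → CanW Ag CS → Prop
  | none, none => False
  | none, some _ => True
  | some _, none => False
  | some p, some q =>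
      (∃ ξ ∈ p.1.val, ∀ τ ∈ q.1.val, ProperPrefix ξ τ) ∨ (p.1.val = q.1.val ∧ q.2 < p.2)

/-- The canonical order ⊴ (reflexive closure of ⊲). -/
def canLe {Ag : Type} [Fintype Ag] (CS : Set (Form Ag)) (m m' : CanW Ag CS) : Prop :=
  canLt CS m m' ∨ m = m'

/-- The height of a canonical moment. -/
def canHeight {Ag : Type} [Fintype Ag] {CS : Set (Form Ag)} : CanW Ag CS → ℕ
  | none => 0
  | some p => p.2

/-- A basic sequence of elements (indexed so that `S n` has length n+1). -/
def BasicSeq {Ag : Type} [Fintype Ag] (CS : Set (Form Ag))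
    (S : ℕ → List (Set (Form Ag))) : Prop :=
  ∀ n, IsElement CS (S n) ∧ (S n).length = n + 1 ∧ S n = (S (n + 1)).dropLast

/-- [S]: the subset of the canonical Tree induced by a basic sequence S. -/
def SeqSet {Ag : Type} [Fintype Ag] (CS : Set (Form Ag))
    (S : ℕ → List (Set (Form Ag))) : Set (CanW Ag CS) :=
  {m | m = none ∨ ∃ p : {C : Set (List (Set (Form Ag))) // IsEqClass CS C} × ℕ,
        m = some p ∧ ∃ n, p.1.val = eqcl CS (S n)}

/-- The standard canonical moment ([ξ]_≡, k). -/
def stdM {Ag : Type} [Fintype Ag] (CS : Set (Form Ag)) (ξ : List (Set (Form Ag)))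
    (hξ : IsElement CS ξ) (k : ℕ) : CanW Ag CS :=
  some (⟨eqcl CS ξ, ⟨ξ, hξ, rfl⟩⟩, k)

/-- H_m in the canonical Tree. -/
def canHist {Ag : Type} [Fintype Ag] (CS : Set (Form Ag)) (m : CanW Ag CS) :
    Set (Set (CanW Ag CS)) :=
  {h | IsMaxChain (canLe CS) h ∧ m ∈ h}

/-- τ is the intersection m ⊓ h of a standard moment m with a history h. -/
def InterRel {Ag : Type} [Fintype Ag] (CS : Set (Form Ag)) (m : CanW Ag CS)
    (h : Set (CanW Ag CS)) (τ : List (Set (Form Ag))) : Prop :=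
  (∃ p, m = some p ∧ τ ∈ p.1.val) ∧
  ∃ S, BasicSeq CS S ∧ h = SeqSet CS S ∧ ∃ n, τ = S n

/-- The intersection m ⊓ h as a function (via choice; `[]` if undefined). -/
noncomputable def interF {Ag : Type} [Fintype Ag] (CS : Set (Form Ag)) (m : CanW Ag CS)
    (h : Set (CanW Ag CS)) : List (Set (Form Ag)) :=
  if hx : ∃ τ, InterRel CS m h τ then hx.choose else []

/-- The canonical choice function: the cell of h at m for agent j. -/
noncomputable def canChoice {Ag : Type} [Fintype Ag] (CS : Set (Form Ag)) (m : CanW Ag CS)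
    (j : Ag) (h : Set (CanW Ag CS)) : Set (Set (CanW Ag CS)) :=
  if m.isSome = true ∧ canHeight m = 0 then
    {h' | h' ∈ canHist CS m ∧
      ∀ A : Form Ag, Form.stit j A ∈ endSet (interF CS m h) → A ∈ endSet (interF CS m h')}
  else canHist CS m

/-- The canonical Act function. -/
noncomputable def canAct {Ag : Type} [Fintype Ag] (CS : Set (Form Ag)) :
    CanW Ag CS → Set (CanW Ag CS) → Set Pol
  | none, _ => ∅
  | some p, h =>
      if p.2 = 0 then
        {t | ∃ A : Form Ag, Form.proven t A ∈ endSet (interF CS (some p) h) ∨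
              ∃ j : Ag, Form.prove j t A ∈ endSet (interF CS (some p) h)}
      else {t | ∃ A : Form Ag, Form.proven t A ∈ endSet (interF CS (some p) h)}

/-- Act_m in the canonical model. -/
noncomputable def canActM {Ag : Type} [Fintype Ag] (CS : Set (Form Ag)) (m : CanW Ag CS) :
    Set Pol :=
  {t | ∀ g ∈ canHist CS m, t ∈ canAct CS m g}

/-- end_m = ⋂_{h ∈ H_m} end(m ⊓ h). -/
noncomputable def endM {Ag : Type} [Fintype Ag] (CS : Set (Form Ag)) (m : CanW Ag CS) :
    Set (Form Ag) :=
  {A | ∀ h ∈ canHist CS m, A ∈ endSet (interF CS m h)}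

/-- The canonical epistemic accessibility relation. -/
def canR {Ag : Type} [Fintype Ag] (CS : Set (Form Ag)) : CanW Ag CS → CanW Ag CS → Prop
  | none, _ => True
  | some _, none => False
  | some p, some q =>
      ∀ (A : Form Ag), ∀ ξ ∈ p.1.val, Form.know A ∈ endSet ξ → Form.know A ∈ endM CS (some q)

/-- The canonical admissible evidence function. -/
noncomputable def canE {Ag : Type} [Fintype Ag] (CS : Set (Form Ag)) :
    CanW Ag CS → Pol → Set (Form Ag)
  | none, t => {A | Prov CS (Form.pf t A)}
  | some p, t => {A | Form.pf t A ∈ endM CS (some p)}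

/-- The canonical valuation. -/
def canV {Ag : Type} [Fintype Ag] (CS : Set (Form Ag)) (n : ℕ) (m : CanW Ag CS)
    (h : Set (CanW Ag CS)) : Prop :=
  m.isSome = true ∧ Form.var n ∈ endSet (interF CS m h)

/-- The canonical model M^Ag_CS (unirelational: R_e = R). -/
noncomputable def canModel {Ag : Type} [Fintype Ag] (CS : Set (Form Ag)) : PreModel Ag where
  W := CanW Ag CS
  le := canLe CS
  Choice := canChoice CS
  Act := canAct CS
  R := canR CS
  Re := canR CS
  E := canE CS
  V := canV CS

/-- The alternative system Π'(CS) with axiom scheme (A_S4) in place of rule (S4). -/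
inductive Prov' {Ag : Type} [Fintype Ag] (CS : Set (Form Ag)) : Form Ag → Prop
  | ax {A : Form Ag} : Ax A → Prov' CS A
  | as4 (l : List (Pol × Form Ag)) (hne : l ≠ []) :
      Prov' CS ((Form.know (Form.disjList (l.map fun p => (Form.proven p.1 p.2).neg))).imp
        (Form.disjList (l.map fun p => bigConjAg fun j => (Form.prove j p.1 p.2).neg)))
  | mp {A B : Form Ag} : Prov' CS (A.imp B) → Prov' CS A → Prov' CS B
  | knec {A : Form Ag} : Prov' CS A → Prov' CS (Form.know A)
  | rcs {A : Form Ag} : A ∈ CS → Prov' CS A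

/-- A is moment-determinate in M. -/
def MomentDet {Ag : Type} (M : PreModel Ag) (A : Form Ag) : Prop :=
  ∀ m h h', M.HistAt m h → M.HistAt m h' → (M.Sat A m h ↔ M.Sat A m h')

/-!
If `x` is presented at `m` on a history `g` but not guaranteed there, then `g` continues past `m`,
and at the next moment `m'` of `g` exactly the proofs presented at `(m, g)` are proven: they persist
on all histories through `m'`, which are undivided at `m`, while nothing proven at `m'` is new
there. So a law "`x` proven implies `y` proven" forces `y` to be presented together with `x` along
every history in the chosen cell. Without a next moment this fails: over a root from which two
copies of `ℤ` branch off, neither copy has a first moment, so `y` may be present throughout one of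
them without ever being new and without being presented at the root.
-/

namespace Form

variable {Ag : Type}

/-- The formula `A` of the paper that separates discrete time from arbitrary time: if knowably `y`
is a proven proof of `q` whenever `x` is a proven proof of `p`, then an agent who proves `p` by `x`
also has `y` proven or proves it, provided that `y` is a proof of `q` at all. -/
def separating (j : Ag) (x y : Pol) (p q : Form Ag) : Form Ag :=
  (know (((proven x p).neg).or (proven y q))).imp
    (((prove j x p).neg).or ((pf y q).imp ((proven y q).or (prove j y q))))

end Form

theorem mem_of_rel_of_isMaxChain {α : Type*} {r : α → α → Prop} {s : Set α} {a b : α}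
    (htrans : ∀ u v w, r u v → r v w → r u w)
    (hlinear : ∀ w u v, r u w → r v w → r u v ∨ r v u)
    (hs : IsMaxChain r s) (hb : b ∈ s) (hab : r a b) : a ∈ s := by
  have hchain : IsChain r (insert a s) := by
    refine hs.isChain.insert fun c hc _ => ?_
    obtain rfl | hne := eq_or_ne c b
    · exact .inl hab
    obtain hcb | hbc := hs.isChain hc hb hne
    · exact hlinear b a c hab hcb
    · exact .inl (htrans a b c hab hbc)
  exact hs.2 hchain (Set.subset_insert a s) ▸ Set.mem_insert a s

namespace PreModel

variable {Ag : Type} {M : PreModel Ag} {m m' : M.W} {g h k : Set M.W} {t : Pol}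

theorem sat_imp {A B : Form Ag} : M.Sat (A.imp B) m h ↔ (M.Sat A m h → M.Sat B m h) := by
  simp only [Form.imp, Sat, not_and, not_not]

theorem sat_or {A B : Form Ag} : M.Sat (A.or B) m h ↔ M.Sat A m h ∨ M.Sat B m h := by
  simp only [Form.or, Sat, not_and_or, not_not]

theorem sat_neg_or {A B : Form Ag} :
    M.Sat (A.neg.or B) m h ↔ (M.Sat A m h → M.Sat B m h) := by
  rw [sat_or, imp_iff_not_or, Sat]

theorem sat_separating {j : Ag} {x y : Pol} {p q : Form Ag} :
    M.Sat (Form.separating j x y p q) m h ↔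
      (M.Sat (.know ((Form.proven x p).neg.or (.proven y q))) m h →
        M.Sat (.prove j x p) m h → M.Sat (.pf y q) m h →
          M.Sat (.proven y q) m h ∨ M.Sat (.prove j y q) m h) := by
  rw [Form.separating, sat_imp, sat_neg_or, sat_imp, sat_or]

/-- Truth of a formula at every moment-history pair of a model. -/
def Valid (M : PreModel Ag) (A : Form Ag) : Prop :=
  ∀ m h, M.HistAt m h → M.Sat A m h

/-- `m'` is a next moment after `m`. Comparing `m` with every moment strictly before `m'`, rather
than only with those on a given history, loses nothing because the past of `m'` is linear. -/
def IsNext (M : PreModel Ag) (m m' : M.W) : Prop :=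
  M.lt m m' ∧ ∀ m₀, M.lt m₀ m' → M.le m₀ m

/-- Every moment that is not the last one of a history has a next moment on that history. This is
the weakening of discrete time under which `Form.separating` is valid. -/
def HasNextMoments (M : PreModel Ag) : Prop :=
  ∀ h, IsMaxChain M.le h → ∀ m ∈ h, ∀ m₁ ∈ h, M.lt m m₁ → ∃ m' ∈ h, M.IsNext m m'

namespace IsJStit

theorem mem_of_le (hM : M.IsJStit) (hg : IsMaxChain M.le g) (hm' : m' ∈ g) (hle : M.le m m') :
    m ∈ g :=
  mem_of_rel_of_isMaxChain hM.le_trans hM.noBackBranch hg hm' hle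

theorem histAt_of_le (hM : M.IsJStit) (hg : M.HistAt m' g) (hle : M.le m m') : M.HistAt m g :=
  ⟨hg.1, hM.mem_of_le hg.1 hg.2 hle⟩

theorem history_eq_of_forall_le (hM : M.IsJStit) (hg : M.HistAt m g) (hk : M.HistAt m k)
    (hlast : ∀ m₁ ∈ g, M.le m₁ m) : k = g :=
  (hg.1.2 hk.1.isChain fun m₁ hm₁ => hM.mem_of_le hk.1 hk.2 (hlast m₁ hm₁)).symm

theorem hasNextMoments (hM : M.IsJStit) (hD : M.DiscreteTime) : M.HasNextMoments := by
  intro h hh m hm m₁ hm₁ hlt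
  obtain ⟨f, hf, hf_surj⟩ := hD h hh
  have f_lt {a b : M.W} (ha : a ∈ h) (hb : b ∈ h) (hab : M.lt a b) : f a < f b :=
    lt_of_not_ge fun hba => hab.2 (hM.le_antisymm _ _ hab.1 ((hf b hb a ha).2 hba))
  obtain ⟨m', hm', hfm'⟩ := hf_surj m₁ hm₁ (f m + 1) (f_lt hm hm₁ hlt)
  refine ⟨m', hm', ⟨(hf m hm m' hm').2 (by omega), by rintro rfl; omega⟩, fun m₀ hm₀ => ?_⟩
  have hm₀h : m₀ ∈ h := hM.mem_of_le hh hm' hm₀.1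
  have := f_lt hm₀h hm' hm₀
  exact (hf m₀ hm₀h m hm).2 (by omega)

theorem sat_pf_mono (hM : M.IsJStit) {A : Form Ag} (hle : M.le m m') (hA : M.Sat (.pf t A) m h) :
    M.Sat (.pf t A) m' h := by
  have hRe : M.Re m m' := hM.r_sub_re _ _ (hM.futureMatters _ _ hle)
  exact ⟨hM.monoEv t _ _ hRe hA.1, fun m₁ h₁ hm₁ => hA.2 m₁ h₁ (hM.re_trans _ _ _ hRe hm₁)⟩

theorem exists_lt_of_notMem_actM (hM : M.IsJStit) (hg : M.HistAt m g) (ht : t ∈ M.Act m g)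
    (htm : t ∉ M.ActM m) : ∃ m₁ ∈ g, M.lt m m₁ := by
  by_contra! hlast
  refine htm fun k hk => ?_
  rwa [hM.history_eq_of_forall_le hg hk fun m₁ hm₁ => ?_]
  obtain rfl | hne := eq_or_ne m m₁
  · exact hM.le_refl m
  · exact (hg.1.isChain hg.2 hm₁ hne).resolve_left fun hle => hlast m₁ hm₁ ⟨hle, hne⟩

theorem act_eq_of_lt (hM : M.IsJStit) (hlt : M.lt m m') (hg : M.HistAt m' g)
    (hk : M.HistAt m' k) : M.Act m k = M.Act m g :=
  hM.divide m k g (hM.histAt_of_le hk hlt.1) (hM.histAt_of_le hg hlt.1) ⟨m', hlt, hk.2, hg.2⟩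

theorem actM_eq_act_of_isNext (hM : M.IsJStit) (hnext : M.IsNext m m') (hg : M.HistAt m' g) :
    M.ActM m' = M.Act m g := by
  refine Set.Subset.antisymm (fun t ht => ?_) fun t ht k hk => ?_
  · obtain ⟨m₀, k, hm₀, hk, htk⟩ := hM.noNew m' t ht
    rw [← hM.act_eq_of_lt hnext.1 hg hk]
    obtain rfl | hne := eq_or_ne m₀ m
    · exact htk
    · exact hM.expand m₀ m k ⟨hnext.2 m₀ hm₀, hne⟩ (hM.histAt_of_le hk hnext.1.1) htk
  · rw [← hM.act_eq_of_lt hnext.1 hg hk] at ht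
    exact hM.expand m m' k hnext.1 hk ht

theorem valid_separating (hM : M.IsJStit) (hnext : M.HasNextMoments) (j : Ag) (x y : Pol)
    (p q : Form Ag) : M.Valid (.separating j x y p q) := by
  intro m h hm
  rw [sat_separating]
  rintro hK ⟨hxC, hx, hxm⟩ hy
  by_cases hym : y ∈ M.ActM m
  · exact .inl ⟨hym, hy⟩
  refine .inr ⟨fun g hgC => ?_, hy, hym⟩
  have hg : M.HistAt m g := hM.choice_hist m j h hm g hgC
  obtain ⟨m₁, hm₁, hlt⟩ := hM.exists_lt_of_notMem_actM hg (hxC g hgC) hxm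
  obtain ⟨m', hm'g, hm'⟩ := hnext g hg.1 m hg.2 m₁ hm₁ hlt
  have hact : M.ActM m' = M.Act m g := hM.actM_eq_act_of_isNext hm' ⟨hg.1, hm'g⟩
  have hx' : M.Sat (.proven x p) m' g := ⟨hact ▸ hxC g hgC, hM.sat_pf_mono (h := g) hm'.1.1 hx⟩
  have hy' : M.Sat (.proven y q) m' g :=
    sat_neg_or.1 (hK m' g (hM.futureMatters _ _ hm'.1.1) ⟨hg.1, hm'g⟩) hx'
  exact hact ▸ hy'.1

end IsJStit

end PreModel

/-- The tree in which one copy of `α` for each `i : ι` branches off from a common root `⊥`. -/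
abbrev Broom (ι α : Type*) : Type _ := WithBot (Σ _ : ι, α)

namespace Broom

variable {ι α : Type*} {i : ι} {a : α}

/-- The element `a` of the `i`-th copy of `α` in a broom. -/
abbrev stem (i : ι) (a : α) : Broom ι α := ((⟨i, a⟩ : Σ _ : ι, α) : WithBot (Σ _ : ι, α))

theorem eq_bot_or_eq_stem (m : Broom ι α) : m = ⊥ ∨ ∃ i a, m = stem i a := by
  obtain rfl | hm := eq_or_ne m ⊥
  · exact .inl rfl
  · obtain ⟨⟨i, a⟩, rfl⟩ := WithBot.ne_bot_iff_exists.1 hm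
    exact .inr ⟨i, a, rfl⟩

theorem stem_inj {k : ι} {b : α} : stem i a = stem k b ↔ i = k ∧ a = b := by
  simp only [stem, WithBot.coe_inj, Sigma.mk.injEq, heq_eq_eq]

/-- The history of a broom that consists of the root and the `i`-th copy of `α`. -/
def branch (ι α : Type*) (i : ι) : Set (Broom ι α) := insert ⊥ (Set.range (stem i))

theorem bot_mem_branch : ⊥ ∈ branch ι α i := .inl rfl

theorem stem_mem_branch : stem i a ∈ branch ι α i := .inr ⟨a, rfl⟩

theorem branch_injective [Nonempty α] : Function.Injective (branch ι α) := by
  intro i k hik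
  obtain ⟨a⟩ := ‹Nonempty α›
  obtain hbot | ⟨b, hb⟩ := hik ▸ stem_mem_branch (i := i) (a := a)
  · exact absurd hbot WithBot.coe_ne_bot
  · exact (stem_inj.1 hb).1.symm

section LinearOrder

variable [LinearOrder α] {m m' n : Broom ι α} {g h : Set (Broom ι α)}

theorem stem_le_iff {i k : ι} {a b : α} : stem i a ≤ stem k b ↔ i = k ∧ a ≤ b := by
  rw [WithBot.coe_le_coe]
  constructor
  · rintro ⟨_, _, _, hab⟩
    exact ⟨rfl, hab⟩
  · rintro ⟨rfl, hab⟩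
    exact Sigma.mk_le_mk_iff.2 hab

theorem le_total_of_le (hm : m ≤ n) (hm' : m' ≤ n) : m ≤ m' ∨ m' ≤ m := by
  obtain rfl | ⟨i, a, rfl⟩ := eq_bot_or_eq_stem m
  · exact .inl bot_le
  obtain rfl | ⟨k, b, rfl⟩ := eq_bot_or_eq_stem m'
  · exact .inr bot_le
  obtain rfl | ⟨l, c, rfl⟩ := eq_bot_or_eq_stem n
  · exact absurd (le_bot_iff.1 hm) WithBot.coe_ne_bot
  obtain ⟨rfl, -⟩ := stem_le_iff.1 hm
  obtain ⟨rfl, -⟩ := stem_le_iff.1 hm'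
  simpa only [stem_le_iff, true_and] using le_total a b

theorem isChain_branch : IsChain (· ≤ ·) (branch ι α i) := by
  have hstem : Monotone (stem i : α → Broom ι α) := fun _ _ hab => stem_le_iff.2 ⟨rfl, hab⟩
  exact hstem.isChain_range.insert fun _ _ _ => .inl bot_le

theorem subset_branch (hh : IsChain (· ≤ ·) h) (ha : stem i a ∈ h) : h ⊆ branch ι α i := by
  intro m hm
  obtain rfl | ⟨k, b, rfl⟩ := eq_bot_or_eq_stem m
  · exact bot_mem_branch
  obtain rfl : i = k := (hh.total ha hm).elim (fun hle => (stem_le_iff.1 hle).1)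
    fun hle => (stem_le_iff.1 hle).1.symm
  exact stem_mem_branch

theorem isMaxChain_branch [Nonempty α] : IsMaxChain (· ≤ ·) (branch ι α i) := by
  obtain ⟨a⟩ := ‹Nonempty α›
  exact ⟨isChain_branch, fun _ hh hsub =>
    hsub.antisymm (subset_branch hh (hsub (stem_mem_branch (a := a))))⟩

theorem eq_branch_of_stem_mem (hh : IsMaxChain (· ≤ ·) h)
    (ha : stem i a ∈ h) : h = branch ι α i :=
  hh.2 isChain_branch (subset_branch hh.isChain ha)

theorem history_eq_of_mem_of_mem (hg : IsMaxChain (· ≤ ·) g) (hh : IsMaxChain (· ≤ ·) h)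
    (hm : m ≠ ⊥) (hmg : m ∈ g) (hmh : m ∈ h) : g = h := by
  obtain ⟨i, a, rfl⟩ := (eq_bot_or_eq_stem _).resolve_left hm
  rw [eq_branch_of_stem_mem hg hmg, eq_branch_of_stem_mem hh hmh]

theorem exists_ne_bot_lt [NoMinOrder α] (hm : m ≠ ⊥) : ∃ m' < m, m' ≠ ⊥ := by
  obtain ⟨i, a, rfl⟩ := (eq_bot_or_eq_stem _).resolve_left hm
  obtain ⟨b, hb⟩ := exists_lt a
  exact ⟨stem i b,
    WithBot.coe_lt_coe.2 (Sigma.mk_lt_mk_iff.2 hb), WithBot.coe_ne_bot⟩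

end LinearOrder

variable {Ag : Type} {x y t : Pol} {j₀ : Ag} {m m' : Broom Bool ℤ} {h : Set (Broom Bool ℤ)}

/-- The countermodel: two copies of `ℤ` over a root. Agent `j₀` alone chooses the branch. On
the `true` branch `x` is presented at every moment and `y` at every moment except the root; on the
other branch nothing is ever presented. -/
abbrev model (x y : Pol) (j₀ : Ag) : PreModel Ag where
  W := Broom Bool ℤ
  le := (· ≤ ·)
  Choice m j h := {g | (IsMaxChain (· ≤ ·) g ∧ m ∈ g) ∧ (j = j₀ → g = h)}
  Act m h := {t | h = branch Bool ℤ true ∧ (t = x ∨ m ≠ ⊥ ∧ t = y)}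
  R := (· ≤ ·)
  Re := (· ≤ ·)
  E _ _ := Set.univ
  V _ _ _ := True

theorem histAt_bot_branch (b : Bool) : (model x y j₀).HistAt ⊥ (branch Bool ℤ b) :=
  ⟨isMaxChain_branch, bot_mem_branch⟩

theorem history_eq_of_undiv {g : Set (Broom Bool ℤ)} (hg : (model x y j₀).HistAt m g)
    (hh : (model x y j₀).HistAt m h) (hu : (model x y j₀).Undiv m g h) : g = h := by
  obtain ⟨m', ⟨hle, hne⟩, hm'g, hm'h⟩ := hu
  exact history_eq_of_mem_of_mem hg.1 hh.1 (ne_bot_of_gt (lt_of_le_of_ne hle hne)) hm'g hm'h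

theorem notMem_actM_bot : t ∉ (model x y j₀).ActM ⊥ := fun ht =>
  Bool.false_ne_true (branch_injective (ht _ (histAt_bot_branch false)).1)

theorem ne_bot_of_mem_actM (ht : t ∈ (model x y j₀).ActM m) : m ≠ ⊥ := by
  rintro rfl
  exact notMem_actM_bot ht

theorem act_congr (hm : m ≠ ⊥) (hm' : m' ≠ ⊥) :
    (model x y j₀).Act m h = (model x y j₀).Act m' h := by
  simp only [hm, hm', ne_eq, not_false_eq_true]

theorem actM_mono (hle : m ≤ m') :
    (model x y j₀).ActM m ⊆ (model x y j₀).ActM m' := by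
  intro t ht h hh
  have hm : m ≠ ⊥ := ne_bot_of_mem_actM ht
  have hmh : m ∈ h :=
    mem_of_rel_of_isMaxChain (r := (· ≤ ·)) (fun _ _ _ => le_trans) (fun _ _ _ => le_total_of_le)
      hh.1 hh.2 hle
  exact act_congr hm (ne_bot_of_le_ne_bot hm hle) ▸ ht h ⟨hh.1, hmh⟩

theorem exists_lt_mem_act (ht : t ∈ (model x y j₀).ActM m) :
    ∃ m' h, (model x y j₀).lt m' m ∧ (model x y j₀).HistAt m h ∧ t ∈ (model x y j₀).Act m' h := by
  have hm : m ≠ ⊥ := ne_bot_of_mem_actM ht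
  obtain ⟨m', hlt, hm'⟩ := exists_ne_bot_lt hm
  obtain ⟨i, a, rfl⟩ := (eq_bot_or_eq_stem m).resolve_left hm
  have hh : (model x y j₀).HistAt (stem i a) (branch Bool ℤ i) :=
    ⟨isMaxChain_branch, stem_mem_branch⟩
  exact ⟨m', _, ⟨hlt.le, hlt.ne⟩, hh, act_congr hm hm' ▸ ht _ hh⟩

theorem isJStit_model : (model x y j₀).IsJStit where
  nonempty := ⟨⊥⟩
  le_refl := le_refl
  le_trans _ _ _ := le_trans
  le_antisymm _ _ := le_antisymm
  histConn _ _ := ⟨⊥, bot_le, bot_le⟩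
  noBackBranch _ _ _ := le_total_of_le
  choice_self _ _ _ hh := ⟨hh, fun _ => rfl⟩
  choice_hist _ _ _ _ _ hg := hg.1
  choice_cells _ _ _ _ _ hg :=
    Set.ext fun _ => and_congr_right' (imp_congr_right fun hj => by rw [hg.2 hj])
  noChoiceUndiv _ _ _ _ hh hg hu := by rw [history_eq_of_undiv hh hg hu]
  indep _ f hf := ⟨f j₀, fun _ => ⟨hf j₀, fun hj => by rw [hj]⟩⟩
  r_refl := le_refl
  r_trans _ _ _ := le_trans
  re_refl := le_refl
  re_trans _ _ _ := le_trans
  r_sub_re _ _ := id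
  monoEv _ _ _ _ := Set.Subset.rfl
  evApp _ _ _ _ _ _ _ := Set.mem_univ _
  evSum _ _ _ := Set.subset_univ _
  evBang _ _ _ _ := Set.mem_univ _
  expand _ _ _ hlt _ _ ht :=
    ⟨ht.1, ht.2.imp_right fun ht => ⟨ne_bot_of_gt (lt_of_le_of_ne hlt.1 hlt.2), ht.2⟩⟩
  noNew _ _ := exists_lt_mem_act
  divide _ _ _ hh hg hu := by rw [history_eq_of_undiv hh hg hu]
  futureMatters _ _ := id
  transparency _ _ := actM_mono

theorem mem_actM_of_mem_actM (hx : x ∈ (model x y j₀).ActM m) : y ∈ (model x y j₀).ActM m :=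
  fun h hh => ⟨(hx h hh).1, .inr ⟨ne_bot_of_mem_actM hx, rfl⟩⟩

theorem not_sat_separating (hxy : x ≠ y) (np nq : ℕ) :
    ¬ (model x y j₀).Sat (.separating j₀ x y (.var np) (.var nq)) ⊥ (branch Bool ℤ true) := by
  rw [PreModel.sat_separating]
  intro hsat
  have hpf (n : ℕ) (s : Pol) (m : Broom Bool ℤ) (h : Set (Broom Bool ℤ)) :
      (model x y j₀).Sat (.pf s (.var n)) m h := ⟨Set.mem_univ _, fun _ _ _ _ => trivial⟩
  have hlaw : (model x y j₀).Sat (.know ((Form.proven x (.var np)).neg.or (.proven y (.var nq))))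
      ⊥ (branch Bool ℤ true) := fun m h _ _ =>
    PreModel.sat_neg_or.2 fun hx => ⟨mem_actM_of_mem_actM hx.1, hpf nq y m h⟩
  have hprove : (model x y j₀).Sat (.prove j₀ x (.var np)) ⊥ (branch Bool ℤ true) :=
    ⟨fun _ hg => ⟨hg.2 rfl, .inl rfl⟩, hpf np x ⊥ (branch Bool ℤ true), notMem_actM_bot⟩
  obtain hy | hy := hsat hlaw hprove (hpf nq y _ _)
  · exact notMem_actM_bot hy.1
  · obtain ⟨-, hyx | ⟨hbot, -⟩⟩ :=
      hy.1 _ (isJStit_model.choice_self _ j₀ _ (histAt_bot_branch true))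
    · exact hxy hyx.symm
    · exact hbot rfl

theorem exists_not_sat_separating (hxy : x ≠ y) (np nq : ℕ) (j : Ag) :
    ∃ M : PreModel Ag, M.IsJStit ∧ M.Unirelational ∧
      ∃ m h, M.HistAt m h ∧ ¬ M.Sat (.separating j x y (.var np) (.var nq)) m h :=
  ⟨model x y j, isJStit_model, fun _ _ => id, ⊥, branch Bool ℤ true, histAt_bot_branch true,
    not_sat_separating hxy np nq⟩

end Broom

theorem discrete_time_proper_general {Ag : Type} [Nonempty Ag] (D : PreModel Ag → Prop)
    (hD : ∀ M : PreModel Ag, M.IsJStit → D M → M.HasNextMoments) :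
    {A : Form Ag | ∀ M : PreModel Ag, M.IsJStit → M.Valid A} ⊂
      {A : Form Ag | ∀ M : PreModel Ag, M.IsJStit → D M → M.Valid A} ∧
    {A : Form Ag | ∀ M : PreModel Ag, M.IsJStit → M.Unirelational → M.Valid A} ⊂
      {A : Form Ag | ∀ M : PreModel Ag, M.IsJStit → M.Unirelational → D M → M.Valid A} ∧
    ∀ (x y : Pol) (np nq : ℕ), x ≠ y → ∀ j : Ag,
      (∀ M : PreModel Ag, M.IsJStit → D M → M.Valid (.separating j x y (.var np) (.var nq))) ∧
      ∃ M : PreModel Ag, M.IsJStit ∧ M.Unirelational ∧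
        ∃ m h, M.HistAt m h ∧ ¬ M.Sat (.separating j x y (.var np) (.var nq)) m h := by
  have hvalid (x y : Pol) (p q : Form Ag) (j : Ag) (M : PreModel Ag) (hM : M.IsJStit)
      (hDM : D M) : M.Valid (.separating j x y p q) :=
    hM.valid_separating (hD M hM hDM) j x y p q
  let A (j : Ag) : Form Ag := .separating j (.pvar 0) (.pvar 1) (.var 0) (.var 1)
  obtain ⟨j⟩ := ‹Nonempty Ag›
  obtain ⟨M, hM, hU, m, h, hmh, hA⟩ : ∃ M : PreModel Ag, M.IsJStit ∧ M.Unirelational ∧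
      ∃ m h, M.HistAt m h ∧ ¬ M.Sat (A j) m h :=
    Broom.exists_not_sat_separating (by simp) 0 1 j
  refine ⟨Set.ssubset_iff_exists.2 ⟨fun B hB M hM _ => hB M hM, A j, ?_, ?_⟩,
    Set.ssubset_iff_exists.2 ⟨fun B hB M hM hU _ => hB M hM hU, A j, ?_, ?_⟩, fun x y np nq hxy j =>
      ⟨hvalid x y _ _ j, Broom.exists_not_sat_separating hxy np nq j⟩⟩
  · exact hvalid _ _ _ _ j
  · exact fun hall => hA (hall M hM m h hmh)
  · exact fun M hM _ => hvalid _ _ _ _ j M hM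
  · exact fun hall => hA (hall M hM hU m h hmh)

/-- The validities over all (unirelational) jstit models form a
proper subset of the validities over (unirelational) jstit models based on
discrete time; witnessed by the formula
K(¬Proven(x,p) ∨ Proven(y,q)) → (¬Prove(j,x,p) ∨ (y:q → (Proven(y,q) ∨ Prove(j,y,q)))). -/
theorem discrete_time_proper {Ag : Type} [Fintype Ag] [Nonempty Ag] :
    ({A : Form Ag | ∀ M : PreModel Ag, M.IsJStit →
        ∀ m h, M.HistAt m h → M.Sat A m h} ⊂
      {A : Form Ag | ∀ M : PreModel Ag, M.IsJStit → M.DiscreteTime →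
        ∀ m h, M.HistAt m h → M.Sat A m h}) ∧
    ({A : Form Ag | ∀ M : PreModel Ag, M.IsJStit → M.Unirelational →
        ∀ m h, M.HistAt m h → M.Sat A m h} ⊂
      {A : Form Ag | ∀ M : PreModel Ag, M.IsJStit → M.Unirelational → M.DiscreteTime →
        ∀ m h, M.HistAt m h → M.Sat A m h}) ∧
    (∀ (nx ny np nq : ℕ), nx ≠ ny → np ≠ nq → ∀ j : Ag,
      let x : Pol := Pol.pvar nx
      let y : Pol := Pol.pvar ny
      let p : Form Ag := Form.var np
      let q : Form Ag := Form.var nq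
      let A : Form Ag :=
        (Form.know (((Form.proven x p).neg).or (Form.proven y q))).imp
          (((Form.prove j x p).neg).or
            ((Form.pf y q).imp ((Form.proven y q).or (Form.prove j y q))))
      (∀ M : PreModel Ag, M.IsJStit → M.DiscreteTime →
          ∀ m h, M.HistAt m h → M.Sat A m h) ∧
      (∃ M : PreModel Ag, M.IsJStit ∧ M.Unirelational ∧
          ∃ m h, M.HistAt m h ∧ ¬ M.Sat A m h)) := by
  obtain ⟨hall, huni, hsep⟩ := discrete_time_proper_general (Ag := Ag)
    PreModel.DiscreteTime fun _ hM => hM.hasNextMoments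
  exact ⟨hall, huni, fun nx ny np nq hxy _ => hsep (.pvar nx) (.pvar ny) np nq (by simpa using hxy)⟩
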